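/- Fix c ≥ 1 and partitions ν₁ = (ν₁₁,…,ν₁ℓ₁) and ν₂ = (ν₂₁,…,ν₂ℓ₂) of the same positive integer s, such that no part of ν₁ equals a part of ν₂. Equip the rectangle Δ of width c and height s with boundary data μ₁ = (c) on the bottom edge, μ₂ = (c) on the top edge, ν₁ on the left edge and ν₂ on the right edge. Then the sum of mult(γ) over all λ-increasing lattice paths γ from (0,s) to (c,0) in Δ with ℓ₁+ℓ₂+1 steps equals (ℓ₁!/|Aut ν₁|) · (ℓ₂!/|Aut ν₂|) · (∏_{j=1}^{ℓ₁} ν₁ⱼ) · (∏_{j=1}^{ℓ₂} ν₂ⱼ) · c^{ℓ₁+ℓ₂}, where |Aut ν| = ∏_k m_k(ν)! and m_k(ν) denotes the number of parts of ν equal to k. -/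

import Mathlib

open Classical

noncomputable section

namespace TropPaths

/-- Lattice points of the plane. -/
abbrev Pt := ℤ × ℤ

/-- The order on `ℤ²` induced by `λ(x,y) = x - εy` for a small irrational `ε > 0`:
`p ≺ q` iff `p₁ < q₁`, or (`p₁ = q₁` and `p₂ > q₂`). -/
def lamLT (p q : Pt) : Prop := p.1 < q.1 ∨ (p.1 = q.1 ∧ q.2 < p.2)

/-- A lattice path, recorded as the list of its points, is `λ`-increasing. -/
def Increasing (γ : List Pt) : Prop := List.Chain' lamLT γ

/-- The determinant of two vectors in `ℤ²`. -/
def det (u v : Pt) : ℤ := u.1 * v.2 - u.2 * v.1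

/-- The `k`-th point of a path (junk value out of range). -/
def pt (γ : List Pt) (k : ℕ) : Pt := γ.getD k (0, 0)

/-- The `k`-th step vector of a path. -/
def stepAt (γ : List Pt) (k : ℕ) : Pt := pt γ (k + 1) - pt γ k

/-- The list of all step vectors of a path. -/
def steps (γ : List Pt) : List Pt := List.zipWith (fun a b => b - a) γ γ.tail

/-- The multiset of down steps `(0,-s)`, `s > 0`, of a path. -/
def downSteps (γ : List Pt) : Multiset Pt :=
  Multiset.filter (fun v => v.1 = 0 ∧ v.2 < 0) (steps γ : Multiset Pt)

/-- The multiset of up-right steps of a path. -/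
def upRightSteps (γ : List Pt) : Multiset Pt :=
  Multiset.filter (fun v => 0 < v.1 ∧ 0 < v.2) (steps γ : Multiset Pt)

/-- The path makes a turn of sign `s` at the (interior) index `k`; for left turns
`s = (0 < ·)`, for right turns `s = (· < 0)`. -/
def TurnAt (s : ℤ → Prop) (γ : List Pt) (k : ℕ) : Prop :=
  0 < k ∧ k + 1 < γ.length ∧ s (det (pt γ k - pt γ (k - 1)) (pt γ (k + 1) - pt γ k))

/-- `k` is the first turn of sign `s` of the path. -/
def FirstTurn (s : ℤ → Prop) (γ : List Pt) (k : ℕ) : Prop :=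
  TurnAt s γ k ∧ ∀ j, TurnAt s γ j → k ≤ j

/-- Twice the area of the triangle with vertices `γ(k-1), γ(k), γ(k+1)`. -/
def triArea2 (γ : List Pt) (k : ℕ) : ℕ :=
  (det (pt γ k - pt γ (k - 1)) (pt γ (k + 1) - pt γ k)).natAbs

/-- The path obtained by cutting the corner at index `k`, i.e. deleting the point `γ(k)`. -/
def cut (γ : List Pt) (k : ℕ) : List Pt := γ.eraseIdx k

/-- The path obtained by completing the parallelogram at index `k`, i.e. replacing
`γ(k)` by `γ(k-1) + γ(k+1) - γ(k)`. -/
def push (γ : List Pt) (k : ℕ) : List Pt :=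
  γ.set k (pt γ (k - 1) + pt γ (k + 1) - pt γ k)

/-- All points of the path lie in `Δ`. -/
def Inside (Δ : Set Pt) (γ : List Pt) : Prop := ∀ z ∈ γ, z ∈ Δ

/-- Mikhalkin's multiplicity recursion, as a functional relation: `MultRel Δ Init s γ m`
means that the recursion (performed always at the *first* turn of sign `s`) assigns the
multiplicity `m` to the path `γ`.  Here `Δ` is the set of lattice points of the polygon,
`Init` the set of initial paths (of multiplicity `1`), and `s` the turn sign
(`0 < ·` for left turns / `mult₊`, `· < 0` for right turns / `mult₋`). -/
inductive MultRel (Δ : Set Pt) (Init : List Pt → Prop) (s : ℤ → Prop) : List Pt → ℕ → Prop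
  | init {γ : List Pt} : Init γ → MultRel Δ Init s γ 1
  | noTurn {γ : List Pt} : ¬Init γ → (∀ k, ¬TurnAt s γ k) → MultRel Δ Init s γ 0
  | stepIn {γ : List Pt} {k m' m'' : ℕ} : ¬Init γ → FirstTurn s γ k →
      Inside Δ (push γ k) → MultRel Δ Init s (cut γ k) m' →
      MultRel Δ Init s (push γ k) m'' →
      MultRel Δ Init s γ (triArea2 γ k * m' + m'')
  | stepOut {γ : List Pt} {k m' : ℕ} : ¬Init γ → FirstTurn s γ k →
      ¬Inside Δ (push γ k) → MultRel Δ Init s (cut γ k) m' →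
      MultRel Δ Init s γ (triArea2 γ k * m')

/-- The multiplicity function determined by Mikhalkin's recursion. -/
def multOf (Δ : Set Pt) (Init : List Pt → Prop) (s : ℤ → Prop) (γ : List Pt) : ℕ :=
  if h : ∃ m, MultRel Δ Init s γ m then h.choose else 0

/-- `γ ≺ δ`: the path `δ` is obtained from `γ` by finitely many steps of the multiplicity
recursion (each step cuts the corner at the first turn of sign `s`, or completes the
parallelogram there). -/
inductive Reaches (Δ : Set Pt) (Init : List Pt → Prop) (s : ℤ → Prop) : List Pt → List Pt → Prop
  | refl (γ : List Pt) : Reaches Δ Init s γ γ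
  | cutStep {γ δ : List Pt} {k : ℕ} : ¬Init γ → FirstTurn s γ k →
      Reaches Δ Init s (cut γ k) δ → Reaches Δ Init s γ δ
  | pushStep {γ δ : List Pt} {k : ℕ} : ¬Init γ → FirstTurn s γ k →
      Inside Δ (push γ k) → Reaches Δ Init s (push γ k) δ → Reaches Δ Init s γ δ

/-- The lattice path starting at `p` with the given list of step vectors. -/
def pathFrom : Pt → List Pt → List Pt
  | p, [] => [p]
  | p, v :: vs => p :: pathFrom (p + v) vs

/-- Horizontal (rightward) steps of the given sizes. -/
def hSteps (l : List ℕ) : List Pt := l.map fun k => ((k : ℤ), 0)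

/-- Vertical downward steps of the given sizes. -/
def dSteps (l : List ℕ) : List Pt := l.map fun k => ((0 : ℤ), -(k : ℤ))

/-- A multiset of positive integers is a partition of `t`. -/
def IsPartition (m : Multiset ℕ) (t : ℕ) : Prop := (∀ k ∈ m, 0 < k) ∧ m.sum = t

/-! ## The rectangle `[0,c] × [0,d]` -/

/-- The lattice points of the rectangle with vertices `(0,0), (c,0), (0,d), (c,d)`. -/
def rect (c d : ℕ) : Set Pt := {z | 0 ≤ z.1 ∧ z.1 ≤ (c : ℤ) ∧ 0 ≤ z.2 ∧ z.2 ≤ (d : ℤ)}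

/-- `β₊`-initial paths of the rectangle: from `p = (0,d)` clockwise along the top edge with
step sizes the parts of `μ₂` and then down the right edge with step sizes the parts of `ν₂`. -/
def InitPlusRect (d : ℕ) (μ₂ ν₂ : Multiset ℕ) (γ : List Pt) : Prop :=
  ∃ s t : List ℕ, (s : Multiset ℕ) = μ₂ ∧ (t : Multiset ℕ) = ν₂ ∧
    γ = pathFrom (0, (d : ℤ)) (hSteps s ++ dSteps t)

/-- `β₋`-initial paths of the rectangle: from `p = (0,d)` counterclockwise down the left edge
with step sizes the parts of `ν₁` and then along the bottom edge with step sizes the parts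
of `μ₁`. -/
def InitMinusRect (d : ℕ) (μ₁ ν₁ : Multiset ℕ) (γ : List Pt) : Prop :=
  ∃ s t : List ℕ, (s : Multiset ℕ) = ν₁ ∧ (t : Multiset ℕ) = μ₁ ∧
    γ = pathFrom (0, (d : ℤ)) (dSteps s ++ hSteps t)

/-- `mult₊` for the rectangle with boundary data `(μ₁, μ₂, ν₁, ν₂)`. -/
def multPlusRect (c d : ℕ) (μ₂ ν₂ : Multiset ℕ) : List Pt → ℕ :=
  multOf (rect c d) (InitPlusRect d μ₂ ν₂) (fun x => 0 < x)

/-- `mult₋` for the rectangle with boundary data `(μ₁, μ₂, ν₁, ν₂)`. -/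
def multMinusRect (c d : ℕ) (μ₁ ν₁ : Multiset ℕ) : List Pt → ℕ :=
  multOf (rect c d) (InitMinusRect d μ₁ ν₁) (fun x => x < 0)

/-- `mult = mult₊ · mult₋` for the rectangle with boundary data `(μ₁, μ₂, ν₁, ν₂)`. -/
def multRect (c d : ℕ) (μ₁ μ₂ ν₁ ν₂ : Multiset ℕ) (γ : List Pt) : ℕ :=
  multPlusRect c d μ₂ ν₂ γ * multMinusRect c d μ₁ ν₁ γ

/-- A `λ`-increasing lattice path from `(0,d)` to `(c,0)` contained in the rectangle. -/
def IsPathRect (c d : ℕ) (γ : List Pt) : Prop :=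
  Increasing γ ∧ γ.head? = some (0, (d : ℤ)) ∧ γ.getLast? = some ((c : ℤ), 0) ∧
    Inside (rect c d) γ

/-- The genericity condition: all subset sums of the `xᵢ` are distinct. -/
def Generic {n : ℕ} (x : Fin n → ℕ) : Prop :=
  ∀ I J : Finset (Fin n), I ≠ J → ∑ i ∈ I, x i ≠ ∑ j ∈ J, x j

/-! ## Admissible pairs and the paths `γ(A,B)` -/

/-- An admissible pair `(A,B)`: pairwise disjoint sequences `A₀,…,A_{c-1}` in `{1,…,n}`
whose entries together partition `{1,…,n}`, and pairwise disjoint subsets `B₀,…,B_{c-1}`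
with union `{1,…,n}`, such that `B₀ ≠ ∅` and
`B_k ⊆ (A₀ ∪ ⋯ ∪ A_k) \ (B₀ ∪ ⋯ ∪ B_{k-1})` for all `k`. -/
def IsAdmissible {c n : ℕ} (A : Fin c → List (Fin n)) (B : Fin c → Finset (Fin n)) : Prop :=
  ((List.ofFn A).flatten : Multiset (Fin n)) = (Finset.univ : Finset (Fin n)).val ∧
  (∀ i : Fin n, ∃! k : Fin c, i ∈ B k) ∧
  (∀ k : Fin c, (k : ℕ) = 0 → (B k).Nonempty) ∧
  ∀ k : Fin c, B k ⊆
    (Finset.univ.filter fun i => ∃ j : Fin c, j ≤ k ∧ i ∈ A j) \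
      (Finset.univ.filter fun i => ∃ j : Fin c, j < k ∧ i ∈ B j)

/-- The steps of `γ(A,B)` in the column `x = k`: down steps of sizes `xᵢ`, `i ∈ A_k`, in
order, followed by the step `(1, Σ_{i ∈ B_k} xᵢ)` to the next column. -/
def colSteps {c n : ℕ} (x : Fin n → ℕ) (A : Fin c → List (Fin n))
    (B : Fin c → Finset (Fin n)) (k : Fin c) : List Pt :=
  ((A k).map fun i => ((0 : ℤ), -(x i : ℤ))) ++ [((1 : ℤ), ∑ i ∈ B k, (x i : ℤ))]

/-- The lattice path `γ(A,B)` associated to an admissible pair, from `(0,d)` to `(c,0)`,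
whose last step is the full right edge. -/
def gammaAB {c n : ℕ} (x : Fin n → ℕ) (A : Fin c → List (Fin n))
    (B : Fin c → Finset (Fin n)) : List Pt :=
  pathFrom (0, ((∑ i, x i : ℕ) : ℤ))
    ((List.ofFn (colSteps x A B)).flatten ++ [((0 : ℤ), -((∑ i, x i : ℕ) : ℤ))])

/-! ## The trapezoid of Lemma 4.? -/

/-- The lattice points of the trapezoid with vertices `(0,0), (0,a), (1,a), (1,b)`. -/
def trap (a b : ℕ) : Set Pt :=
  {z | 0 ≤ z.1 ∧ z.1 ≤ 1 ∧ (b : ℤ) * z.1 ≤ z.2 ∧ z.2 ≤ (a : ℤ)}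

/-- `β₊`-initial paths of the trapezoid: one step of lattice length 1 along the top edge,
then down the right edge with step sizes the parts of `βright`. -/
def InitPlusTrap (a : ℕ) (βright : Multiset ℕ) (γ : List Pt) : Prop :=
  ∃ t : List ℕ, (t : Multiset ℕ) = βright ∧
    γ = pathFrom (0, (a : ℤ)) (((1 : ℤ), (0 : ℤ)) :: dSteps t)

/-! ## Automorphisms of a partition -/

/-- `|Aut ν| = ∏_k m_k(ν)!` where `m_k(ν)` is the number of parts of `ν` equal to `k`. -/
def autCard (m : Multiset ℕ) : ℕ :=
  (m.dedup.map fun k => (m.count k).factorial).prod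

/-!
The multiplicity recursion never creates a down step: a parallelogram move permutes the steps of a
path, and cutting a corner merges two nonparallel steps into one that is not vertical. Hence a path
of nonzero multiplicity contains the down steps of sizes `ν₁` and those of sizes `ν₂`. These are
disjoint, so on a path with `ℓ₁ + ℓ₂ + 1` steps exactly one step is left over, and it crosses the
rectangle. The down steps before and after it have total size `2 * s`, and the height `s` bounds
each of the two groups, so the path goes down the left edge, crosses along `(c, s)` and goes down
the right edge. For such a path every parallelogram move leaves the rectangle, so the recursion only
cuts corners, of doubled areas `c` times the sizes of the down steps on one edge. It succeeds
exactly if these steps form an ordering of `ν₁` on the left edge and of `ν₂` on the right edge, and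
a partition `ν` of length `ℓ` has `ℓ! / |Aut ν|` orderings.
-/

/-! ## Orderings of a multiset -/

section Orderings

variable {α : Type*}

lemma exists_eq_append_cons_of_coe_le {N : Multiset α} {L : List α} {w : α} (hN : N ≤ L)
    (hcard : L.length = N.card + 1) (hw : w ∈ L) (hwN : w ∉ N) :
    ∃ X Y, L = X ++ w :: Y ∧ ((X ++ Y : List α) : Multiset α) = N := by
  obtain ⟨X, Y, rfl⟩ := List.append_of_mem hw
  have hL : ((X ++ w :: Y : List α) : Multiset α) = w ::ₘ ((X ++ Y : List α) : Multiset α) := by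
    rw [Multiset.cons_coe, Multiset.coe_eq_coe]
    exact List.perm_middle
  have hcard : X.length + Y.length = N.card := by simpa [← add_assoc] using hcard
  rw [hL, Multiset.le_cons_of_notMem hwN] at hN
  exact ⟨X, Y, rfl, (Multiset.eq_of_le_of_card_le hN (by simp [hcard])).symm⟩

variable [DecidableEq α] {m : Multiset α}

/-- The orderings of a multiset: the finite set of lists having it as multiset of entries. -/
def orderings (m : Multiset α) : Finset (List α) := m.lists.toFinset

lemma mem_orderings {l : List α} : l ∈ orderings m ↔ (l : Multiset α) = m := by
  rw [orderings, Multiset.mem_toFinset, Multiset.mem_lists_iff, Multiset.quot_mk_to_coe, eq_comm]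

lemma orderings_eq_biUnion (hm : m ≠ 0) :
    orderings m = m.toFinset.biUnion fun a => (orderings (m.erase a)).image (List.cons a) := by
  ext l
  simp only [mem_orderings, Finset.mem_biUnion, Finset.mem_image, Multiset.mem_toFinset]
  constructor
  · rintro rfl
    obtain _ | ⟨a, l⟩ := l
    · exact absurd rfl hm
    · exact ⟨a, by simp, l, by simp, rfl⟩
  · rintro ⟨a, ha, l, hl, rfl⟩
    rw [← Multiset.cons_coe, hl, Multiset.cons_erase ha]

lemma card_orderings (hm : m ≠ 0) :
    (orderings m).card = ∑ a ∈ m.toFinset, (orderings (m.erase a)).card := by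
  rw [orderings_eq_biUnion hm, Finset.card_biUnion]
  · simp only [Finset.card_image_of_injective _ List.cons_injective]
  · intro a _ b _ hab
    simp only [Function.onFun, Finset.disjoint_left]
    grind

lemma prod_factorial_count_cons (a : α) (m : Multiset α) :
    ∏ k ∈ (a ::ₘ m).toFinset, ((a ::ₘ m).count k).factorial =
      (a ::ₘ m).count a * ∏ k ∈ m.toFinset, (m.count k).factorial := by
  have hm : ∏ k ∈ m.toFinset, (m.count k).factorial =
      ∏ k ∈ insert a m.toFinset, (m.count k).factorial := by
    refine Finset.prod_subset (Finset.subset_insert _ _) fun k _ hk => ?_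
    rw [Multiset.count_eq_zero_of_notMem (by simpa using hk), Nat.factorial_zero]
  rw [hm, Multiset.toFinset_cons, ← Finset.mul_prod_erase _ _ (Finset.mem_insert_self a _),
    ← Finset.mul_prod_erase _ _ (Finset.mem_insert_self a _), ← mul_assoc,
    Multiset.count_cons_self, Nat.factorial_succ]
  congr 1
  refine Finset.prod_congr rfl fun k hk => ?_
  rw [Multiset.count_cons_of_ne (Finset.ne_of_mem_erase hk)]

lemma card_orderings_mul_prod_factorial_count (m : Multiset α) :
    (orderings m).card * ∏ k ∈ m.toFinset, (m.count k).factorial = m.card.factorial := by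
  induction hn : m.card generalizing m with
  | zero =>
    have hnil : orderings (0 : Multiset α) = {[]} := by
      ext l
      simp [mem_orderings]
    simp [Multiset.card_eq_zero.1 hn, hnil]
  | succ n ih =>
    have hterm : ∀ a ∈ m.toFinset,
        (orderings (m.erase a)).card * ∏ k ∈ m.toFinset, (m.count k).factorial =
          m.count a * n.factorial := fun a ha => by
      obtain ⟨m, rfl⟩ := Multiset.exists_cons_of_mem (Multiset.mem_toFinset.1 ha)
      rw [Multiset.card_cons, Nat.succ_inj] at hn
      rw [Multiset.erase_cons_head, prod_factorial_count_cons, ← ih m hn]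
      ring
    rw [card_orderings (by rintro rfl; simp at hn), Finset.sum_mul, Finset.sum_congr rfl hterm,
      ← Finset.sum_mul, Multiset.toFinset_sum_count_eq, hn, Nat.factorial_succ]

lemma autCard_eq_prod (ν : Multiset ℕ) :
    autCard ν = ∏ k ∈ ν.toFinset, (ν.count k).factorial :=
  rfl

lemma autCard_ne_zero (ν : Multiset ℕ) : autCard ν ≠ 0 := by
  rw [autCard_eq_prod]
  exact Finset.prod_ne_zero_iff.2 fun k _ => (ν.count k).factorial_ne_zero

lemma card_orderings_eq_div (ν : Multiset ℕ) :
    ((orderings ν).card : ℚ) = (ν.card.factorial : ℚ) / autCard ν := by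
  rw [eq_div_iff (Nat.cast_ne_zero.2 (autCard_ne_zero ν)), autCard_eq_prod]
  exact_mod_cast card_orderings_mul_prod_factorial_count ν

end Orderings

/-! ## Paths as sequences of steps -/

section Steps

variable (p : Pt) (L X Y : List Pt) (u v : Pt)

lemma length_pathFrom : (pathFrom p L).length = L.length + 1 := by
  induction L generalizing p with
  | nil => rfl
  | cons v L ih => simp [pathFrom, ih]

lemma head?_pathFrom : (pathFrom p L).head? = some p := by
  cases L <;> rfl

lemma getLast?_pathFrom : (pathFrom p L).getLast? = some (p + L.sum) := by
  induction L generalizing p with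
  | nil => simp [pathFrom]
  | cons v L ih => simp [pathFrom, List.getLast?_cons, ih, add_assoc]

lemma pathFrom_append_cons :
    pathFrom p (X ++ v :: Y) = pathFrom p X ++ pathFrom (p + X.sum + v) Y := by
  induction X generalizing p with
  | nil => simp [pathFrom]
  | cons w X ih => simp [pathFrom, ih, add_assoc]

lemma steps_pathFrom : steps (pathFrom p L) = L := by
  induction L generalizing p with
  | nil => rfl
  | cons v L ih =>
    have ih := ih (p + v)
    cases L <;> simp_all [steps, pathFrom]

lemma pathFrom_inj {M : List Pt} : pathFrom p L = pathFrom p M ↔ L = M :=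
  ⟨fun h => by simpa only [steps_pathFrom] using congrArg steps h, fun h => h ▸ rfl⟩

lemma exists_cons_eq_pathFrom (γ : List Pt) : ∃ L, p :: γ = pathFrom p L := by
  induction γ generalizing p with
  | nil => exact ⟨[], rfl⟩
  | cons q γ ih =>
    obtain ⟨L, hL⟩ := ih q
    exact ⟨(q - p) :: L, by simp [pathFrom, hL]⟩

lemma pt_pathFrom {k : ℕ} (hk : k ≤ L.length) : pt (pathFrom p L) k = p + (L.take k).sum := by
  induction L generalizing p k with
  | nil => simp_all [pt, pathFrom]
  | cons v L ih =>
    cases k with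
    | zero => simp [pt, pathFrom]
    | succ k =>
      have hpt : pt (pathFrom p (v :: L)) (k + 1) = pt (pathFrom (p + v) L) k := rfl
      simp [hpt, ih _ (Nat.le_of_succ_le_succ hk), add_assoc]

lemma pt_pathFrom_succ_sub {k : ℕ} (hk : k < L.length) :
    pt (pathFrom p L) (k + 1) - pt (pathFrom p L) k = L[k] := by
  simp [pt_pathFrom _ _ hk, pt_pathFrom _ _ hk.le, List.sum_take_succ _ _ hk]

lemma push_pathFrom :
    push (pathFrom p (X ++ u :: v :: Y)) (X.length + 1) = pathFrom p (X ++ v :: u :: Y) := by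
  have hnew : pt (pathFrom p (X ++ u :: v :: Y)) X.length +
      pt (pathFrom p (X ++ u :: v :: Y)) (X.length + 1 + 1) -
        pt (pathFrom p (X ++ u :: v :: Y)) (X.length + 1) = p + X.sum + v := by
    have hv := pt_pathFrom_succ_sub p (X ++ u :: v :: Y) (k := X.length + 1) (by simp)
    rw [add_sub_assoc, hv, pt_pathFrom _ _ (by simp)]
    simp
  rw [push, Nat.add_sub_cancel, hnew, pathFrom_append_cons, pathFrom_append_cons]
  simp [pathFrom, length_pathFrom, add_assoc, add_comm u v]

lemma cut_pathFrom :
    cut (pathFrom p (X ++ u :: v :: Y)) (X.length + 1) = pathFrom p (X ++ (u + v) :: Y) := by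
  simp [cut, pathFrom_append_cons, pathFrom, List.eraseIdx_append, length_pathFrom, add_assoc]

lemma increasing_pathFrom : Increasing (pathFrom p L) ↔ ∀ v ∈ L, lamLT 0 v := by
  change (pathFrom p L).IsChain lamLT ↔ _
  induction L generalizing p with
  | nil => simp [pathFrom]
  | cons v L ih =>
    have hv : lamLT p (p + v) ↔ lamLT 0 v := by simp [lamLT, eq_comm]
    rw [pathFrom, List.isChain_cons, ih, head?_pathFrom]
    simp [hv]

lemma downSteps_pathFrom :
    downSteps (pathFrom p L) = (L : Multiset Pt).filter fun v => v.1 = 0 ∧ v.2 < 0 := by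
  rw [downSteps, steps_pathFrom]

lemma inside_pathFrom_cons (Δ : Set Pt) :
    Inside Δ (pathFrom p (v :: L)) ↔ p ∈ Δ ∧ Inside Δ (pathFrom (p + v) L) := by
  simp [Inside, pathFrom]

lemma inside_pathFrom_append_cons (Δ : Set Pt) :
    Inside Δ (pathFrom p (X ++ v :: Y)) ↔
      Inside Δ (pathFrom p X) ∧ Inside Δ (pathFrom (p + X.sum + v) Y) := by
  simp only [Inside, pathFrom_append_cons, List.mem_append, or_imp, forall_and]

end Steps

/-! ## Turns and the multiplicity recursion -/

section Recursion

variable {Δ : Set Pt} {Init : List Pt → Prop} {s : ℤ → Prop} {γ δ : List Pt} {k m n : ℕ}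
  {p u v : Pt} {L X Y : List Pt}

lemma turnAt_pathFrom_succ :
    TurnAt s (pathFrom p L) (k + 1) ↔ ∃ h : k + 1 < L.length, s (det L[k] L[k + 1]) := by
  constructor
  · rintro ⟨-, hk, hs⟩
    have hk : k + 1 < L.length := by simpa [length_pathFrom] using hk
    rw [Nat.add_sub_cancel, pt_pathFrom_succ_sub _ _ hk,
      pt_pathFrom_succ_sub _ _ (Nat.lt_of_succ_lt hk)] at hs
    exact ⟨hk, hs⟩
  · rintro ⟨hk, hs⟩
    refine ⟨k.succ_pos, by simpa [length_pathFrom] using hk, ?_⟩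
    rwa [Nat.add_sub_cancel, pt_pathFrom_succ_sub _ _ hk,
      pt_pathFrom_succ_sub _ _ (Nat.lt_of_succ_lt hk)]

lemma exists_corner_of_turnAt (h : TurnAt s γ k) :
    ∃ p X u v Y, γ = pathFrom p (X ++ u :: v :: Y) ∧ k = X.length + 1 ∧ s (det u v) := by
  obtain ⟨k, rfl⟩ : ∃ j, k = j + 1 := ⟨k - 1, (Nat.sub_add_cancel h.1).symm⟩
  obtain _ | ⟨p, γ⟩ := γ
  · exact absurd h.2.1 (Nat.not_lt_zero _)
  obtain ⟨L, hL⟩ := exists_cons_eq_pathFrom p γ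
  obtain ⟨hk, hs⟩ := turnAt_pathFrom_succ.1 (hL ▸ h)
  refine ⟨p, L.take k, L[k], L[k + 1], L.drop (k + 2), ?_, ?_, hs⟩
  · rw [← List.drop_eq_getElem_cons, ← List.drop_eq_getElem_cons, List.take_append_drop, hL]
  · rw [List.length_take_of_le (Nat.lt_of_succ_lt hk).le]

lemma not_turnAt_of_isChain (h : L.IsChain fun u v => ¬s (det u v)) :
    ¬TurnAt s (pathFrom p L) k := by
  obtain _ | k := k
  · exact fun hk => hk.1.false
  · rw [turnAt_pathFrom_succ]
    exact fun ⟨hk, hs⟩ => List.isChain_iff_getElem.1 h k hk hs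

lemma firstTurn_pathFrom (h : (X ++ [u]).IsChain fun u v => ¬s (det u v)) (huv : s (det u v)) :
    FirstTurn s (pathFrom p (X ++ u :: v :: Y)) (X.length + 1) := by
  refine ⟨turnAt_pathFrom_succ.2 ⟨by simp, by simpa using huv⟩, fun j hj => ?_⟩
  obtain _ | j := j
  · exact absurd hj.1 (Nat.lt_irrefl 0)
  obtain ⟨hj', hs⟩ := turnAt_pathFrom_succ.1 hj
  by_contra! hlt
  have hjX : j + 1 < (X ++ [u]).length := by
    rw [List.length_append, List.length_singleton]
    exact hlt
  refine List.isChain_iff_getElem.1 h j hjX ?_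
  convert hs using 2 <;> grind

lemma triArea2_pathFrom :
    triArea2 (pathFrom p (X ++ u :: v :: Y)) (X.length + 1) = (det u v).natAbs := by
  rw [triArea2, Nat.add_sub_cancel, pt_pathFrom_succ_sub _ _ (by simp),
    pt_pathFrom_succ_sub _ _ (by simp)]
  simp

lemma FirstTurn.unique {j : ℕ} (hj : FirstTurn s γ j) (hk : FirstTurn s γ k) : j = k :=
  le_antisymm (hj.2 k hk.1) (hk.2 j hj.1)

lemma MultRel.unique (hm : MultRel Δ Init s γ m) (hn : MultRel Δ Init s γ n) : m = n := by
  induction hm generalizing n with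
  | init h => cases hn <;> first | rfl | contradiction
  | noTurn h ht => cases hn <;> grind [FirstTurn]
  | stepIn h hf hin _ _ ihcut ihpush => cases hn <;> grind [FirstTurn, FirstTurn.unique]
  | stepOut h hf hout _ ihcut => cases hn <;> grind [FirstTurn, FirstTurn.unique]

lemma MultRel.multOf_eq (h : MultRel Δ Init s γ m) : multOf Δ Init s γ = m := by
  rw [multOf, dif_pos ⟨m, h⟩]
  exact MultRel.unique (Exists.choose_spec _) h

lemma multRel_multOf (h : multOf Δ Init s γ ≠ 0) : MultRel Δ Init s γ (multOf Δ Init s γ) := by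
  by_cases hex : ∃ m, MultRel Δ Init s γ m
  · rw [multOf, dif_pos hex]
    exact hex.choose_spec
  · exact absurd (dif_neg hex) h

lemma MultRel.exists_reaches (h : MultRel Δ Init s γ m) (hm : m ≠ 0) :
    ∃ δ, Init δ ∧ Reaches Δ Init s γ δ := by
  induction h with
  | init h => exact ⟨_, h, .refl _⟩
  | noTurn => exact absurd rfl hm
  | @stepIn γ k mcut mpush h hf hin _ _ ihcut ihpush =>
    by_cases hcut : mcut = 0
    · obtain ⟨δ, hδ, hr⟩ := ihpush (by simpa [hcut] using hm)
      exact ⟨δ, hδ, .pushStep h hf hin hr⟩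
    · obtain ⟨δ, hδ, hr⟩ := ihcut hcut
      exact ⟨δ, hδ, .cutStep h hf hr⟩
  | stepOut h hf _ _ ihcut =>
    obtain ⟨δ, hδ, hr⟩ := ihcut (right_ne_zero_of_mul hm)
    exact ⟨δ, hδ, .cutStep h hf hr⟩

lemma multRel_corner (hinit : ¬Init (pathFrom p (X ++ u :: v :: Y)))
    (hchain : (X ++ [u]).IsChain fun u v => ¬s (det u v)) (huv : s (det u v))
    (hout : p + X.sum + v ∉ Δ) (h : MultRel Δ Init s (pathFrom p (X ++ (u + v) :: Y)) m) :
    MultRel Δ Init s (pathFrom p (X ++ u :: v :: Y)) ((det u v).natAbs * m) := by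
  rw [← triArea2_pathFrom (p := p) (X := X) (Y := Y)]
  refine .stepOut hinit (firstTurn_pathFrom hchain huv) (fun hin => hout ?_) ?_
  · rw [push_pathFrom, inside_pathFrom_append_cons] at hin
    exact hin.2 _ (List.mem_of_mem_head? (head?_pathFrom _ _))
  · rwa [cut_pathFrom]

/-! ## Down steps along the recursion -/

lemma add_fst_pos (hu : lamLT 0 u) (hv : lamLT 0 v) (h : det u v ≠ 0) : 0 < (u + v).1 := by
  obtain ⟨a, b⟩ := u
  obtain ⟨x, y⟩ := v
  simp only [lamLT, Prod.fst_zero, Prod.snd_zero, Prod.mk_add_mk] at *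
  rcases hu with ha | ⟨rfl, -⟩ <;> rcases hv with hx | ⟨rfl, -⟩ <;> first | omega | simp [det] at h

lemma increasing_push (hγ : Increasing γ) (h : TurnAt s γ k) : Increasing (push γ k) := by
  obtain ⟨p, X, u, v, Y, rfl, rfl, -⟩ := exists_corner_of_turnAt h
  rw [push_pathFrom]
  grind [increasing_pathFrom]

lemma downSteps_push (h : TurnAt s γ k) : downSteps (push γ k) = downSteps γ := by
  obtain ⟨p, X, u, v, Y, rfl, rfl, -⟩ := exists_corner_of_turnAt h
  rw [push_pathFrom, downSteps_pathFrom, downSteps_pathFrom]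
  exact congrArg _ (Multiset.coe_eq_coe.2 ((List.Perm.swap u v Y).append_left X))

lemma increasing_cut (hs : ¬s 0) (hγ : Increasing γ) (h : TurnAt s γ k) :
    Increasing (cut γ k) := by
  obtain ⟨p, X, u, v, Y, rfl, rfl, huv⟩ := exists_corner_of_turnAt h
  rw [increasing_pathFrom] at hγ
  have hpos := add_fst_pos (hγ u (by simp)) (hγ v (by simp)) fun h0 => hs (h0 ▸ huv)
  rw [cut_pathFrom, increasing_pathFrom]
  intro w hw
  obtain hw | rfl | hw : w ∈ X ∨ w = u + v ∨ w ∈ Y := by simpa using hw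
  · exact hγ w (by simp [hw])
  · exact Or.inl hpos
  · exact hγ w (by simp [hw])

lemma downSteps_cut_le (hs : ¬s 0) (hγ : Increasing γ) (h : TurnAt s γ k) :
    downSteps (cut γ k) ≤ downSteps γ := by
  obtain ⟨p, X, u, v, Y, rfl, rfl, huv⟩ := exists_corner_of_turnAt h
  rw [increasing_pathFrom] at hγ
  have hpos := add_fst_pos (hγ u (by simp)) (hγ v (by simp)) fun h0 => hs (h0 ▸ huv)
  rw [cut_pathFrom, downSteps_pathFrom, downSteps_pathFrom, Multiset.filter_coe,
    Multiset.filter_coe, Multiset.coe_le]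
  refine List.Sublist.subperm ?_
  simp only [List.filter_append, List.filter_cons, hpos.ne', false_and, decide_false,
    Bool.false_eq_true, if_false]
  refine List.Sublist.append_left ?_ _
  split_ifs <;> simp

/-- A parallelogram move permutes the steps, and a cut replaces two nonparallel steps by one that
is not vertical. -/
lemma Reaches.downSteps_le (hs : ¬s 0) (h : Reaches Δ Init s γ δ) (hγ : Increasing γ) :
    downSteps δ ≤ downSteps γ := by
  induction h with
  | refl => exact le_rfl
  | cutStep _ hf _ ih =>
    exact (ih (increasing_cut hs hγ hf.1)).trans (downSteps_cut_le hs hγ hf.1)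
  | pushStep _ hf _ _ ih =>
    exact (ih (increasing_push hγ hf.1)).trans_eq (downSteps_push hf.1)

end Recursion

/-! ## Down steps and zigzag paths -/

/-- The down step of size `a`. -/
def downStep (a : ℕ) : Pt := (0, -(a : ℤ))

lemma downStep_zero : downStep 0 = 0 := rfl

lemma downStep_add (a b : ℕ) : downStep (a + b) = downStep a + downStep b := by
  simp [downStep, add_comm]

lemma downStep_injective : Function.Injective downStep := fun a b h => by
  simpa [downStep] using h

/- Not definitional: in `dSteps` the list is first coerced to `List ℤ`, which elaborates to a
monadic bind. -/
lemma dSteps_eq_map (A : List ℕ) : dSteps A = A.map downStep := by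
  induction A with
  | nil => rfl
  | cons a A ih => simpa [dSteps, downStep] using ih

lemma dSteps_append (A B : List ℕ) : dSteps (A ++ B) = dSteps A ++ dSteps B := by
  simp only [dSteps_eq_map, List.map_append]

lemma dSteps_injective : Function.Injective dSteps := by
  rw [funext dSteps_eq_map]
  exact List.map_injective_iff.2 downStep_injective

lemma sum_dSteps (A : List ℕ) : (dSteps A).sum = downStep A.sum := by
  rw [dSteps_eq_map]
  induction A with
  | nil => rfl
  | cons a A ih => rw [List.map_cons, List.sum_cons, ih, List.sum_cons, downStep_add]

lemma fst_eq_zero_of_mem_dSteps {A : List ℕ} {v : Pt} (hv : v ∈ dSteps A) : v.1 = 0 := by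
  rw [dSteps_eq_map] at hv
  obtain ⟨a, -, rfl⟩ := List.mem_map.1 hv
  rfl

lemma lamLT_of_mem_dSteps {A : List ℕ} (hA : ∀ a ∈ A, 0 < a) {v : Pt} (hv : v ∈ dSteps A) :
    lamLT 0 v := by
  rw [dSteps_eq_map] at hv
  obtain ⟨a, ha, rfl⟩ := List.mem_map.1 hv
  exact Or.inr ⟨rfl, by simpa [downStep] using hA a ha⟩

lemma exists_dSteps_of_coe_eq_map {L : List Pt} {ν : Multiset ℕ}
    (h : (L : Multiset Pt) = ν.map downStep) :
    ∃ A : List ℕ, (A : Multiset ℕ) = ν ∧ L = dSteps A := by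
  have hL : L ∈ Set.range (List.map downStep) := by
    rw [Set.range_list_map]
    intro v hv
    rw [← Multiset.mem_coe, h] at hv
    obtain ⟨a, -, rfl⟩ := Multiset.mem_map.1 hv
    exact ⟨a, rfl⟩
  obtain ⟨A, rfl⟩ := hL
  exact ⟨A, Multiset.map_injective downStep_injective (by rw [← h, Multiset.map_coe]),
    (dSteps_eq_map A).symm⟩

lemma inside_rect_pathFrom_dSteps (c d : ℕ) (p : Pt) (A : List ℕ) :
    Inside (rect c d) (pathFrom p (dSteps A)) ↔ p ∈ rect c d ∧ p + downStep A.sum ∈ rect c d := by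
  rw [dSteps_eq_map]
  induction A generalizing p with
  | nil => simp [Inside, pathFrom, downStep_zero]
  | cons a A ih =>
    rw [List.map_cons, inside_pathFrom_cons, ih, List.sum_cons, downStep_add, ← add_assoc]
    simp only [rect, downStep, Set.mem_ofPred_eq, Prod.fst_add, Prod.snd_add]
    grind

/-- The path starting at `(0, d)` with down steps of sizes `A`, the step `w`, and down steps of
sizes `B`. For `w` of horizontal extent `c` the down steps lie on the left and the right edge of
the rectangle of width `c`. -/
def zigzag (d : ℕ) (w : Pt) (A B : List ℕ) : List Pt :=
  pathFrom (0, (d : ℤ)) (dSteps A ++ w :: dSteps B)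

section Zigzag

variable {c d : ℕ} {w w' : Pt} {A A' B B' : List ℕ} {ν ν₁ ν₂ : Multiset ℕ}

lemma zigzag_inj (hw' : w'.1 ≠ 0) :
    zigzag d w A B = zigzag d w' A' B' ↔ A = A' ∧ w = w' ∧ B = B' := by
  have hmem (C : List ℕ) : w' ∉ dSteps C := fun h => hw' (fst_eq_zero_of_mem_dSteps h)
  rw [zigzag, zigzag, pathFrom_inj, List.append_cons_inj_of_notMem (hmem A) (hmem B),
    dSteps_injective.eq_iff, dSteps_injective.eq_iff]

lemma length_zigzag : (zigzag d w A B).length = A.length + B.length + 2 := by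
  simp only [zigzag, length_pathFrom, dSteps_eq_map, List.length_append, List.length_cons,
    List.length_map]
  omega

lemma inside_rect_zigzag_iff :
    Inside (rect c d) (zigzag d w A B) ↔ A.sum ≤ d ∧
      (0, (d : ℤ)) + downStep A.sum + w ∈ rect c d ∧
      (0, (d : ℤ)) + downStep A.sum + w + downStep B.sum ∈ rect c d := by
  rw [zigzag, inside_pathFrom_append_cons, inside_rect_pathFrom_dSteps,
    inside_rect_pathFrom_dSteps, sum_dSteps]
  refine and_congr_left' ?_
  simp [rect, downStep, -Nat.cast_list_sum]

lemma isPathRect_zigzag_iff (hc : 0 < c) (hA : ∀ a ∈ A, 0 < a) (hB : ∀ b ∈ B, 0 < b) :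
    IsPathRect c d (zigzag d w A B) ↔
      A.sum ≤ d ∧ B.sum ≤ d ∧ w = ((c : ℤ), (A.sum : ℤ) + B.sum - d) := by
  have hinc : Increasing (zigzag d w A B) ↔ lamLT 0 w := by
    rw [zigzag, increasing_pathFrom]
    grind [lamLT_of_mem_dSteps]
  have hlast : (zigzag d w A B).getLast? = some ((c : ℤ), 0) ↔
      w = ((c : ℤ), (A.sum : ℤ) + B.sum - d) := by
    rw [zigzag, getLast?_pathFrom, List.sum_append, List.sum_cons, sum_dSteps, sum_dSteps]
    simp only [Option.some.injEq, Prod.ext_iff, downStep, Prod.fst_add, Prod.snd_add]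
    constructor <;> rintro ⟨h1, h2⟩ <;> constructor <;> linarith
  rw [IsPathRect, hinc, hlast, inside_rect_zigzag_iff]
  simp only [zigzag, head?_pathFrom, true_and]
  constructor
  · rintro ⟨-, rfl, hA, hmid, -⟩
    simp only [rect, downStep, Set.mem_ofPred_eq, Prod.fst_add, Prod.snd_add] at hmid
    exact ⟨hA, by omega, rfl⟩
  · rintro ⟨hA, hB, rfl⟩
    simp only [rect, downStep, lamLT, Set.mem_ofPred_eq, Prod.fst_add, Prod.snd_add,
      Prod.fst_zero, Prod.snd_zero, true_and]
    omega

/-! ## Multiplicities of zigzag paths -/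

lemma initPlusRect_singleton_iff {γ : List Pt} :
    InitPlusRect d {c} ν γ ↔
      ∃ t : List ℕ, (t : Multiset ℕ) = ν ∧ γ = zigzag d ((c : ℤ), (0 : ℤ)) [] t := by
  simp [InitPlusRect, ← Multiset.coe_singleton, zigzag, dSteps, hSteps]

lemma initMinusRect_singleton_iff {γ : List Pt} :
    InitMinusRect d {c} ν γ ↔
      ∃ t : List ℕ, (t : Multiset ℕ) = ν ∧ γ = zigzag d ((c : ℤ), (0 : ℤ)) t [] := by
  simp [InitMinusRect, ← Multiset.coe_singleton, zigzag, dSteps, hSteps]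

lemma initPlusRect_zigzag_iff (hc : 0 < c) :
    InitPlusRect d {c} ν (zigzag d w A B) ↔
      A = [] ∧ w = ((c : ℤ), (0 : ℤ)) ∧ (B : Multiset ℕ) = ν := by
  have hw : ((c : ℤ), (0 : ℤ)).1 ≠ 0 := by simpa using hc.ne'
  simp only [initPlusRect_singleton_iff, zigzag_inj hw]
  grind

lemma initMinusRect_zigzag_iff (hc : 0 < c) :
    InitMinusRect d {c} ν (zigzag d w A B) ↔
      (A : Multiset ℕ) = ν ∧ w = ((c : ℤ), (0 : ℤ)) ∧ B = [] := by
  have hw : ((c : ℤ), (0 : ℤ)).1 ≠ 0 := by simpa using hc.ne'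
  simp only [initMinusRect_singleton_iff, zigzag_inj hw]
  grind

lemma isChain_cons_dSteps (hw : 0 ≤ w.1) :
    (w :: dSteps B).IsChain fun u v => ¬0 < det u v := by
  rw [dSteps_eq_map]
  induction B generalizing w with
  | nil => simp
  | cons b B ih =>
    refine List.isChain_cons_cons.2 ⟨?_, ih le_rfl⟩
    simpa [det, downStep] using mul_nonneg hw b.cast_nonneg

lemma isChain_dSteps_append (hw : 0 ≤ w.1) :
    (dSteps A ++ [w]).IsChain fun u v => ¬det u v < 0 := by
  rw [dSteps_eq_map]
  induction A with
  | nil => simp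
  | cons a A ih =>
    have hfst : ∀ v ∈ A.map downStep ++ [w], 0 ≤ v.1 := by
      grind [downStep]
    refine ih.cons fun v hv => ?_
    simpa [det, downStep] using mul_nonneg a.cast_nonneg (hfst v (List.mem_of_mem_head? hv))

lemma isChain_dSteps : (dSteps A).IsChain fun u v => ¬0 < det u v :=
  (isChain_cons_dSteps le_rfl (w := 0)).tail

lemma multRel_plus_zigzag (hc : 0 < c) (hA : ∀ a ∈ A, 0 < a) :
    MultRel (rect c d) (InitPlusRect d {c} ν) (fun x => 0 < x)
      (zigzag d ((c : ℤ), (A.sum : ℤ)) A B)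
      (if (B : Multiset ℕ) = ν then c ^ A.length * A.prod else 0) := by
  induction A using List.reverseRecOn with
  | nil =>
    split_ifs with hB
    · simpa using MultRel.init ((initPlusRect_zigzag_iff hc).2 ⟨rfl, by simp, hB⟩)
    · exact .noTurn (by simp [initPlusRect_zigzag_iff hc, hB])
        fun k => not_turnAt_of_isChain (isChain_cons_dSteps c.cast_nonneg)
  | append_singleton A a ih =>
    set v : Pt := ((c : ℤ), ((A ++ [a]).sum : ℤ)) with hv
    have ha : 0 < a := hA a (by simp)
    have hsteps : dSteps (A ++ [a]) = dSteps A ++ [downStep a] := by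
      rw [dSteps_append, dSteps_eq_map [a], List.map_singleton]
    have hpath : zigzag d v (A ++ [a]) B =
        pathFrom (0, (d : ℤ)) (dSteps A ++ downStep a :: v :: dSteps B) := by
      rw [zigzag, hsteps, List.append_assoc, List.singleton_append]
    have hdet : det (downStep a) v = (c * a : ℕ) := by simp [det, downStep, hv, mul_comm]
    have hsum : downStep a + v = ((c : ℤ), (A.sum : ℤ)) := by
      simp [downStep, hv]
    have hinit : ¬InitPlusRect d {c} ν (zigzag d v (A ++ [a]) B) := by
      simp [initPlusRect_zigzag_iff hc]
    have hout : (0, (d : ℤ)) + (dSteps A).sum + v ∉ rect c d := by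
      simp only [sum_dSteps, hv, rect, downStep, List.sum_append, List.sum_singleton,
        Set.mem_ofPred_eq, Prod.snd_add, Nat.cast_add]
      omega
    have hcut : MultRel (rect c d) (InitPlusRect d {c} ν) (fun x => 0 < x)
        (pathFrom (0, (d : ℤ)) (dSteps A ++ (downStep a + v) :: dSteps B)) _ :=
      hsum ▸ ih fun x hx => hA x (List.mem_append_left _ hx)
    have hleft : 0 < det (downStep a) v := by
      rw [hdet]
      exact_mod_cast Nat.mul_pos hc ha
    have hcorner := multRel_corner (hpath ▸ hinit) (hsteps ▸ isChain_dSteps) hleft hout hcut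
    rw [hpath]
    convert hcorner using 1
    rw [hdet, Int.natAbs_natCast, mul_ite, mul_zero, List.length_append, List.prod_append]
    simp only [List.length_singleton, List.prod_singleton, pow_succ]
    congr 1
    ring

lemma multRel_minus_zigzag (hc : 0 < c) (hA : A.sum = d) (hB : ∀ b ∈ B, 0 < b) :
    MultRel (rect c d) (InitMinusRect d {c} ν) (fun x => x < 0)
      (zigzag d ((c : ℤ), (B.sum : ℤ)) A B)
      (if (A : Multiset ℕ) = ν then c ^ B.length * B.prod else 0) := by
  induction B with
  | nil =>
    split_ifs with hν
    · simpa using MultRel.init ((initMinusRect_zigzag_iff hc).2 ⟨hν, by simp, rfl⟩)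
    · exact .noTurn (by simp [initMinusRect_zigzag_iff hc, hν])
        fun k => not_turnAt_of_isChain (isChain_dSteps_append c.cast_nonneg)
  | cons b B ih =>
    set u : Pt := ((c : ℤ), ((b :: B).sum : ℤ)) with hu
    have hb : 0 < b := hB b (by simp)
    have hpath : zigzag d u A (b :: B) =
        pathFrom (0, (d : ℤ)) (dSteps A ++ u :: downStep b :: dSteps B) := by
      simp only [zigzag, dSteps_eq_map, List.map_cons]
    have hdet : det u (downStep b) = -(c * b : ℕ) := by simp [det, downStep, hu]
    have hsum : u + downStep b = ((c : ℤ), (B.sum : ℤ)) := by simp [downStep, hu]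
    have hinit : ¬InitMinusRect d {c} ν (zigzag d u A (b :: B)) := by
      simp [initMinusRect_zigzag_iff hc]
    have hout : (0, (d : ℤ)) + (dSteps A).sum + downStep b ∉ rect c d := by
      simp only [sum_dSteps, hA, rect, downStep, Set.mem_ofPred_eq, Prod.snd_add]
      omega
    have hcut : MultRel (rect c d) (InitMinusRect d {c} ν) (fun x => x < 0)
        (pathFrom (0, (d : ℤ)) (dSteps A ++ (u + downStep b) :: dSteps B)) _ :=
      hsum ▸ ih fun x hx => hB x (List.mem_cons_of_mem _ hx)
    have hright : det u (downStep b) < 0 := by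
      rw [hdet, neg_lt_zero]
      exact_mod_cast Nat.mul_pos hc hb
    have hcorner := multRel_corner (hpath ▸ hinit) (isChain_dSteps_append c.cast_nonneg) hright
      hout hcut
    rw [hpath]
    convert hcorner using 1
    rw [hdet, Int.natAbs_neg, Int.natAbs_natCast, mul_ite, mul_zero, List.length_cons,
      List.prod_cons, pow_succ]
    congr 1
    ring

lemma multRect_zigzag (hc : 0 < c) (hA : ∀ a ∈ A, 0 < a) (hB : ∀ b ∈ B, 0 < b)
    (hAd : A.sum = d) (hBd : B.sum = d) :
    multRect c d {c} {c} ν₁ ν₂ (zigzag d ((c : ℤ), (d : ℤ)) A B) =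
      if (A : Multiset ℕ) = ν₁ ∧ (B : Multiset ℕ) = ν₂ then
        A.prod * B.prod * c ^ (A.length + B.length) else 0 := by
  have hplus := (multRel_plus_zigzag hc hA (d := d) (B := B) (ν := ν₂)).multOf_eq
  have hminus := (multRel_minus_zigzag hc hAd hB (ν := ν₁)).multOf_eq
  rw [hAd] at hplus
  rw [hBd] at hminus
  rw [multRect, multPlusRect, multMinusRect, hplus, hminus, mul_comm, ite_zero_mul_ite_zero]
  congr 1
  ring

end Zigzag

/-! ## Paths of nonzero multiplicity -/

section NonzeroMultiplicity

variable {c d : ℕ} {μ μ₁ μ₂ ν ν₁ ν₂ : Multiset ℕ} {γ : List Pt} {p : Pt} {A : List ℕ} {L : List Pt}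

lemma map_downStep_le_downSteps (hA : ∀ a ∈ A, 0 < a) (hAL : (dSteps A).Sublist L) :
    (A : Multiset ℕ).map downStep ≤ downSteps (pathFrom p L) := by
  rw [downSteps_pathFrom, Multiset.le_filter, Multiset.map_coe, ← dSteps_eq_map]
  refine ⟨hAL.subperm, fun v hv => ?_⟩
  have hfst := fst_eq_zero_of_mem_dSteps hv
  exact ⟨hfst, by simpa [lamLT, hfst] using lamLT_of_mem_dSteps hA hv⟩

lemma exists_init_downSteps_le {Δ : Set Pt} {Init : List Pt → Prop} {s : ℤ → Prop} (hs : ¬s 0)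
    (hγ : Increasing γ) (h : multOf Δ Init s γ ≠ 0) :
    ∃ δ, Init δ ∧ downSteps δ ≤ downSteps γ := by
  obtain ⟨δ, hδ, hr⟩ := (multRel_multOf h).exists_reaches h
  exact ⟨δ, hδ, hr.downSteps_le hs hγ⟩

lemma map_downStep_le_of_multPlusRect (hν : ∀ k ∈ ν, 0 < k) (hγ : Increasing γ)
    (h : multPlusRect c d μ ν γ ≠ 0) : ν.map downStep ≤ downSteps γ := by
  obtain ⟨_, ⟨s, t, -, rfl, rfl⟩, hle⟩ := exists_init_downSteps_le (lt_irrefl 0) hγ h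
  exact (map_downStep_le_downSteps hν (List.sublist_append_right _ _)).trans hle

lemma map_downStep_le_of_multMinusRect (hν : ∀ k ∈ ν, 0 < k) (hγ : Increasing γ)
    (h : multMinusRect c d μ ν γ ≠ 0) : ν.map downStep ≤ downSteps γ := by
  obtain ⟨_, ⟨s, t, rfl, -, rfl⟩, hle⟩ :=
    exists_init_downSteps_le (s := fun x => x < 0) (lt_irrefl 0) hγ h
  exact (map_downStep_le_downSteps hν (List.sublist_append_left _ _)).trans hle

lemma map_downStep_add_le_of_multRect (hν₁ : ∀ k ∈ ν₁, 0 < k) (hν₂ : ∀ k ∈ ν₂, 0 < k)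
    (hdisj : Disjoint ν₁ ν₂) (hγ : Increasing γ) (h : multRect c d μ₁ μ₂ ν₁ ν₂ γ ≠ 0) :
    (ν₁ + ν₂).map downStep ≤ downSteps γ := by
  rw [Multiset.add_eq_union_iff_disjoint.2 hdisj, Multiset.map_union downStep_injective]
  exact Multiset.union_le (map_downStep_le_of_multMinusRect hν₁ hγ (right_ne_zero_of_mul h))
    (map_downStep_le_of_multPlusRect hν₂ hγ (left_ne_zero_of_mul h))

lemma exists_fst_ne_zero_of_isPathRect (hc : 0 < c) (h : IsPathRect c d (pathFrom p L)) :
    ∃ w ∈ L, w.1 ≠ 0 := by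
  by_contra! hL
  obtain ⟨-, hhead, hlast, -⟩ := h
  have hsum : L.sum.1 = 0 := by
    rw [← AddMonoidHom.coe_fst, map_list_sum]
    exact List.sum_eq_zero (by simpa using hL)
  rw [head?_pathFrom, Option.some.injEq] at hhead
  rw [getLast?_pathFrom, Option.some.injEq, hhead] at hlast
  have hc0 : L.sum.1 = c := by simpa using congrArg Prod.fst hlast
  omega

lemma exists_zigzag_of_map_downStep_le (hc : 0 < c) (hγ : IsPathRect c d γ)
    (hlen : γ.length = ν.card + 2) (hle : ν.map downStep ≤ downSteps γ) :
    ∃ A B w, ((A ++ B : List ℕ) : Multiset ℕ) = ν ∧ γ = zigzag d w A B := by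
  obtain ⟨γ', rfl⟩ := List.head?_eq_some_iff.1 hγ.2.1
  obtain ⟨L, hL⟩ := exists_cons_eq_pathFrom (0, (d : ℤ)) γ'
  rw [hL] at hγ hlen hle ⊢
  obtain ⟨w, hw, hw0⟩ := exists_fst_ne_zero_of_isPathRect hc hγ
  rw [downSteps_pathFrom] at hle
  have hwν : w ∉ ν.map downStep := fun h =>
    hw0 (Multiset.mem_filter.1 (Multiset.mem_of_le hle h)).2.1
  have hcard : L.length = (ν.map downStep).card + 1 := by
    simpa [length_pathFrom] using hlen
  obtain ⟨X, Y, rfl, hXY⟩ :=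
    exists_eq_append_cons_of_coe_le (hle.trans (Multiset.filter_le _ _)) hcard hw hwν
  obtain ⟨C, rfl, hC⟩ := exists_dSteps_of_coe_eq_map hXY
  rw [dSteps_eq_map, eq_comm, List.map_eq_append_iff] at hC
  obtain ⟨A, B, rfl, rfl, rfl⟩ := hC
  exact ⟨A, B, w, rfl, by rw [zigzag, dSteps_eq_map, dSteps_eq_map]⟩

/-- The height `d` of the rectangle bounds the sums of `A` and of `B`, which together make up
`2 * d`: this pins down the step between them. -/
lemma exists_zigzag_of_multRect_ne_zero (hc : 0 < c) (hν₁ : IsPartition ν₁ d)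
    (hν₂ : IsPartition ν₂ d) (hdisj : Disjoint ν₁ ν₂) (hγ : IsPathRect c d γ)
    (hlen : γ.length = ν₁.card + ν₂.card + 2) (h : multRect c d {c} {c} ν₁ ν₂ γ ≠ 0) :
    ∃ A B : List ℕ, (A : Multiset ℕ) = ν₁ ∧ (B : Multiset ℕ) = ν₂ ∧
      γ = zigzag d ((c : ℤ), (d : ℤ)) A B := by
  obtain ⟨A, B, w, hAB, rfl⟩ := exists_zigzag_of_map_downStep_le hc hγ
    (by rwa [Multiset.card_add]) (map_downStep_add_le_of_multRect hν₁.1 hν₂.1 hdisj hγ.1 h)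
  have hpos : ∀ k ∈ A ++ B, 0 < k := fun k hk => by
    rw [← Multiset.mem_coe, hAB, Multiset.mem_add] at hk
    exact hk.elim (hν₁.1 k) (hν₂.1 k)
  have hA : ∀ a ∈ A, 0 < a := fun a ha => hpos a (List.mem_append_left _ ha)
  have hB : ∀ b ∈ B, 0 < b := fun b hb => hpos b (List.mem_append_right _ hb)
  have hsum : A.sum + B.sum = d + d := by
    rw [← List.sum_append, ← Multiset.sum_coe, hAB, Multiset.sum_add, hν₁.2, hν₂.2]
  obtain ⟨hAd, hBd, rfl⟩ := (isPathRect_zigzag_iff hc hA hB).1 hγ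
  have hAd : A.sum = d := by omega
  have hBd : B.sum = d := by omega
  rw [hAd, hBd, add_sub_cancel_right] at h ⊢
  rw [multRect_zigzag hc hA hB hAd hBd] at h
  obtain ⟨hA₁, hB₂⟩ := (ite_ne_right_iff.1 h).1
  exact ⟨A, B, hA₁, hB₂, rfl⟩

end NonzeroMultiplicity

/-! ## The path count -/

section Count

variable {c d : ℕ} {ν₁ ν₂ : Multiset ℕ} {A B : List ℕ}

lemma isPathRect_zigzag (hc : 0 < c) (hA : IsPartition A d) (hB : IsPartition B d) :
    IsPathRect c d (zigzag d ((c : ℤ), (d : ℤ)) A B) := by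
  have hAd : A.sum = d := hA.2
  have hBd : B.sum = d := hB.2
  exact (isPathRect_zigzag_iff hc hA.1 hB.1).2 ⟨hAd.le, hBd.le, by simp [hAd, hBd]⟩

lemma setOf_isPathRect_inter_support (hc : 0 < c) (hν₁ : IsPartition ν₁ d)
    (hν₂ : IsPartition ν₂ d) (hdisj : Disjoint ν₁ ν₂) :
    {γ | IsPathRect c d γ ∧ γ.length = ν₁.card + ν₂.card + 2} ∩
        (multRect c d {c} {c} ν₁ ν₂).support =
      (((orderings ν₁ ×ˢ orderings ν₂).image fun q =>
        zigzag d ((c : ℤ), (d : ℤ)) q.1 q.2 : Finset (List Pt)) : Set (List Pt)) ∩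
        (multRect c d {c} {c} ν₁ ν₂).support := by
  ext γ
  refine and_congr_left fun h => ?_
  simp only [Finset.coe_image, Finset.coe_product, Set.mem_image, Prod.exists, Set.mem_prod,
    Finset.mem_coe, mem_orderings]
  constructor
  · rintro ⟨hγ, hlen⟩
    obtain ⟨A, B, hA, hB, rfl⟩ := exists_zigzag_of_multRect_ne_zero hc hν₁ hν₂ hdisj hγ hlen h
    exact ⟨A, B, ⟨hA, hB⟩, rfl⟩
  · rintro ⟨A, B, ⟨rfl, rfl⟩, rfl⟩
    exact ⟨isPathRect_zigzag hc hν₁ hν₂, length_zigzag⟩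

lemma finsum_multRect (hc : 0 < c) (hν₁ : IsPartition ν₁ d) (hν₂ : IsPartition ν₂ d)
    (hdisj : Disjoint ν₁ ν₂) :
    ∑ᶠ γ ∈ {γ | IsPathRect c d γ ∧ γ.length = ν₁.card + ν₂.card + 2},
        multRect c d {c} {c} ν₁ ν₂ γ =
      (orderings ν₁).card * (orderings ν₂).card *
        (ν₁.prod * ν₂.prod * c ^ (ν₁.card + ν₂.card)) := by
  have hc0 : ((c : ℤ), (d : ℤ)).1 ≠ 0 := by simpa using hc.ne'
  have hmult : ∀ q ∈ orderings ν₁ ×ˢ orderings ν₂,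
      multRect c d {c} {c} ν₁ ν₂ (zigzag d ((c : ℤ), (d : ℤ)) q.1 q.2) =
        ν₁.prod * ν₂.prod * c ^ (ν₁.card + ν₂.card) := by
    rintro ⟨A, B⟩ hAB
    obtain ⟨rfl, rfl⟩ : (A : Multiset ℕ) = ν₁ ∧ (B : Multiset ℕ) = ν₂ := by
      simpa only [Finset.mem_product, mem_orderings] using hAB
    rw [multRect_zigzag hc hν₁.1 hν₂.1 hν₁.2 hν₂.2, if_pos ⟨rfl, rfl⟩]
    simp only [Multiset.prod_coe, Multiset.coe_card]
  rw [finsum_mem_eq_sum_of_inter_support_eq _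
      (setOf_isPathRect_inter_support hc hν₁ hν₂ hdisj),
    Finset.sum_image fun q _ q' _ h => ?_, Finset.sum_congr rfl hmult, Finset.sum_const,
    Finset.card_product, smul_eq_mul]
  obtain ⟨hA, -, hB⟩ := (zigzag_inj hc0).1 h
  exact Prod.ext hA hB

lemma isPartition_ofFn {l : ℕ} {v : Fin l → ℕ} (hv : ∀ i, 0 < v i) (hsum : ∑ i, v i = d) :
    IsPartition (List.ofFn v) d := by
  refine ⟨fun k hk => ?_, by rw [Multiset.sum_coe, List.sum_ofFn, hsum]⟩
  obtain ⟨i, rfl⟩ := List.mem_ofFn.1 (Multiset.mem_coe.1 hk)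
  exact hv i

lemma disjoint_coe_ofFn {α : Type*} {l₁ l₂ : ℕ} {v₁ : Fin l₁ → α} {v₂ : Fin l₂ → α}
    (h : ∀ i j, v₁ i ≠ v₂ j) :
    Disjoint (List.ofFn v₁ : Multiset α) (List.ofFn v₂ : Multiset α) := by
  rw [Multiset.coe_disjoint]
  intro a h₁ h₂
  obtain ⟨i, rfl⟩ := List.mem_ofFn.1 h₁
  obtain ⟨j, hj⟩ := List.mem_ofFn.1 h₂
  exact h i j hj.symm

end Count

/-- For `μ₁ = μ₂ = (c)` and partitions `ν₁, ν₂` of `s` with no common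
part, the lattice path count in the `c × s` rectangle equals
`(ℓ₁!/|Aut ν₁|) (ℓ₂!/|Aut ν₂|) ∏ν₁ⱼ ∏ν₂ⱼ c^{ℓ₁+ℓ₂}`. -/
theorem count_full_section_tangency (c s l1 l2 : ℕ) (hc : 0 < c) (hs : 0 < s)
    (v1 : Fin l1 → ℕ) (v2 : Fin l2 → ℕ)
    (h1 : ∀ i, 0 < v1 i) (h2 : ∀ j, 0 < v2 j)
    (hs1 : ∑ i, v1 i = s) (hs2 : ∑ j, v2 j = s)
    (hdisj : ∀ i j, v1 i ≠ v2 j) :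
    ((∑ᶠ γ ∈ {γ : List Pt | IsPathRect c s γ ∧ γ.length = l1 + l2 + 2},
        multRect c s {c} {c} ((List.ofFn v1 : List ℕ) : Multiset ℕ)
          ((List.ofFn v2 : List ℕ) : Multiset ℕ) γ : ℕ) : ℚ)
      = ((l1.factorial : ℚ) / (autCard ((List.ofFn v1 : List ℕ) : Multiset ℕ) : ℚ)) *
        ((l2.factorial : ℚ) / (autCard ((List.ofFn v2 : List ℕ) : Multiset ℕ) : ℚ)) *
        (∏ i, (v1 i : ℚ)) * (∏ j, (v2 j : ℚ)) * (c : ℚ) ^ (l1 + l2) := by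
  have hcount := finsum_multRect hc (isPartition_ofFn h1 hs1) (isPartition_ofFn h2 hs2)
    (disjoint_coe_ofFn hdisj)
  have hord₁ := card_orderings_eq_div (List.ofFn v1)
  have hord₂ := card_orderings_eq_div (List.ofFn v2)
  simp only [Multiset.coe_card, List.length_ofFn, Multiset.prod_coe, List.prod_ofFn]
    at hcount hord₁ hord₂
  rw [hcount, ← hord₁, ← hord₂]
  push_cast
  ring

end TropPaths
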